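/- (Proposition 4.2) Let N ≥ 1 be an integer, k > 0, s ≥ 1 an integer, and b₁,…,b_s nonzero real numbers. Given any real-valued U ∈ S_N, there exist real-valued Y^1,…,Y^s ∈ S_N satisfying the s-stage composition step: Y^1 = U + k b₁ F((Y^1 + U)/2) and Y^i = Y^{i−1} + k b_i F((Y^i + Y^{i−1})/2) for 2 ≤ i ≤ s. (No smallness condition on k is required.) -/

import Mathlib

noncomputable section

namespace KdVSpec

/-- The L² inner product of two real-valued functions on `(-π, π)`. -/
def L2inner (u v : ℝ → ℝ) : ℝ := ∫ x in (-Real.pi)..Real.pi, u x * v x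

/-- The L² norm of a real-valued function on `(-π, π)`. -/
def L2norm (u : ℝ → ℝ) : ℝ := Real.sqrt (∫ x in (-Real.pi)..Real.pi, (u x)^2)

/-- The sup norm of a real-valued function on `[-π, π]`. -/
def LinfNorm (u : ℝ → ℝ) : ℝ := sSup ((fun x => |u x|) '' Set.Icc (-Real.pi) Real.pi)

/-- The `W^{1,∞}` norm `‖v‖_{1,∞} = |v|_∞ + |∂ₓ v|_∞`. -/
def norm1inf (u : ℝ → ℝ) : ℝ := LinfNorm u + LinfNorm (deriv u)

/-- The `k`-th Fourier coefficient of a (2π-periodic) function on `(-π,π)`. -/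
def fCoeff (u : ℝ → ℝ) (k : ℤ) : ℂ :=
  (1 / (2 * Real.pi)) *
    ∫ x in (-Real.pi)..Real.pi, Complex.exp (-(Complex.I * (k : ℂ) * (x : ℂ))) * (u x : ℂ)

/-- The periodic Sobolev norm of order `μ`. -/
def sobNorm (μ : ℝ) (u : ℝ → ℝ) : ℝ :=
  Real.sqrt (∑' k : ℤ, (1 + (k : ℝ)^2) ^ μ * ‖fCoeff u k‖^2)

/-- `v` is a (real-valued) trigonometric polynomial of degree at most `N`,
i.e. a member of `S_N = span{e^{ikx} : |k| ≤ N}`. -/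
def InSN (N : ℕ) (v : ℝ → ℝ) : Prop :=
  ∃ c : ℤ → ℂ, ∀ x : ℝ,
    (v x : ℂ) = ∑ k ∈ Finset.Icc (-(N : ℤ)) (N : ℤ), c k * Complex.exp (Complex.I * (k : ℂ) * (x : ℂ))

/-- The orthogonal L²-projection onto `S_N`, `P_N v = Σ_{|k|≤N} v̂(k) e^{ikx}`. -/
def PN (N : ℕ) (u : ℝ → ℝ) : ℝ → ℝ := fun x =>
  (∑ k ∈ Finset.Icc (-(N : ℤ)) (N : ℤ), fCoeff u k * Complex.exp (Complex.I * (k : ℂ) * (x : ℂ))).re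

/-- Spatial derivative `∂ₓ`. -/
def dx (u : ℝ → ℝ) : ℝ → ℝ := deriv u

/-- Third spatial derivative `∂ₓ³`. -/
def dx3 (u : ℝ → ℝ) : ℝ → ℝ := deriv (deriv (deriv u))

/-- The map `F(v) = -∂ₓ³ v - P_N(v ∂ₓ v)` on `S_N`. -/
def Fmap (N : ℕ) (v : ℝ → ℝ) : ℝ → ℝ := fun x =>
  -(dx3 v x) - PN N (fun y => v y * dx v y) x

/-- `u` solves the periodic KdV equation `u_t + u u_x + u_{xxx} = 0` on the time set `I`
(with 2π-periodicity in space). -/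
def IsKdVSolution (u : ℝ → ℝ → ℝ) (I : Set ℝ) : Prop :=
  (∀ t ∈ I, ∀ x : ℝ, u t (x + 2 * Real.pi) = u t x) ∧
  (∀ t ∈ I, ∀ x : ℝ,
    deriv (fun s => u s x) t + u t x * dx (u t) x + dx3 (u t) x = 0)

/-- `w` is the semidiscrete Fourier–Galerkin approximation (with initial value `P_N u₀`)
on the time set `I`: `w(t) ∈ S_N`, `w` is differentiable in time, `w(0) = P_N u₀` and
`(∂_t w + w ∂ₓ w + ∂ₓ³ w, χ) = 0` for every `χ ∈ S_N`. -/
def SemidiscreteOn (N : ℕ) (u0 : ℝ → ℝ) (w : ℝ → ℝ → ℝ) (I : Set ℝ) : Prop :=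
  (∀ t ∈ I, InSN N (w t)) ∧
  (∀ x : ℝ, ∀ t ∈ I, DifferentiableAt ℝ (fun s => w s x) t) ∧
  (∀ x : ℝ, w 0 x = PN N u0 x) ∧
  (∀ t ∈ I, ∀ χ : ℝ → ℝ, InSN N χ →
    L2inner (fun x => deriv (fun s => w s x) t + w t x * dx (w t) x + dx3 (w t) x) χ = 0)


section BrouwerPart

open MeasureTheory Polynomial

variable {E : Type*} [NormedAddCommGroup E] [InnerProductSpace ℝ E] [FiniteDimensional ℝ E]

/-- A small Lipschitz perturbation of the identity is bijective. -/
lemma pert_bijective (h : E → E) (K : NNReal) (hK : LipschitzWith K h) (t : ℝ)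
    (ht0 : 0 ≤ t) (ht : t * K < 1) : Function.Bijective (fun x => x + t • h x) := by
  constructor
  · intro x y hxy
    simp only at hxy
    have h1 : x - y = t • (h y - h x) := by
      rw [smul_sub]
      have := sub_eq_zero.mpr hxy
      rw [← sub_eq_zero, ← this]; abel
    have h2 : ‖x - y‖ ≤ t * K * ‖x - y‖ := by
      have h3 := hK.dist_le_mul y x
      rw [dist_eq_norm, dist_eq_norm, norm_sub_rev y x] at h3
      calc ‖x - y‖ = t * ‖h y - h x‖ := by
            conv_lhs => rw [h1]
            rw [norm_smul, Real.norm_of_nonneg ht0]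
        _ ≤ t * (K * ‖x - y‖) := by gcongr
        _ = _ := by ring
    have h4 : ‖x - y‖ = 0 := by
      have := norm_nonneg (x - y)
      nlinarith
    exact sub_eq_zero.mp (norm_eq_zero.mp h4)
  · intro y
    have : ContractingWith (t.toNNReal * K) (fun x => y - t • h x) := by
      constructor
      · rw [← NNReal.coe_lt_coe]; push_cast
        rw [Real.coe_toNNReal _ ht0]; exact ht
      · apply LipschitzWith.of_dist_le_mul
        intro a b
        have h3 := hK.dist_le_mul a b
        push_cast
        rw [Real.coe_toNNReal _ ht0, dist_sub_left, dist_smul₀, Real.norm_of_nonneg ht0, mul_assoc]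
        gcongr
    have hf := this.fixedPoint_isFixedPt
    refine ⟨ContractingWith.fixedPoint _ this, ?_⟩
    · have h5 : y - t • h (ContractingWith.fixedPoint _ this) = ContractingWith.fixedPoint _ this := hf
      simp only
      nth_rewrite 1 [← h5]
      abel

lemma det_pos_of_small (A : E →L[ℝ] E) (K : ℝ) (hA : ‖A‖ ≤ K) (t : ℝ)
    (ht0 : 0 ≤ t) (ht : t * K < 1) : 0 < (ContinuousLinearMap.id ℝ E + t • A).det := by
  have hne : ∀ s ∈ Set.Icc (0:ℝ) t, (ContinuousLinearMap.id ℝ E + s • A).det ≠ 0 := by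
    intro s hs hdet
    have hk := LinearMap.bot_lt_ker_of_det_eq_zero (f := ((ContinuousLinearMap.id ℝ E + s • A : E →L[ℝ] E) : E →ₗ[ℝ] E)) hdet
    obtain ⟨v, hv, hv0⟩ := (Submodule.ne_bot_iff _).mp hk.ne'
    have hv' : v + s • A v = 0 := by simpa using hv
    have h1 : ‖v‖ ≤ s * (K * ‖v‖) := by
      have : v = - (s • A v) := eq_neg_of_add_eq_zero_left hv'
      calc ‖v‖ = s * ‖A v‖ := by
            conv_lhs => rw [this]
            rw [norm_neg, norm_smul, Real.norm_of_nonneg hs.1]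
        _ ≤ s * (K * ‖v‖) := by
            have := A.le_of_opNorm_le hA v
            have := hs.1
            gcongr
    have hp : 0 < ‖v‖ := norm_pos_iff.mpr hv0
    have hK0 : 0 ≤ K := (norm_nonneg _).trans hA
    have : s * K ≤ t * K := by gcongr; exact hs.2
    nlinarith
  have hcont : Continuous (fun s : ℝ => (ContinuousLinearMap.id ℝ E + s • A).det) := by
    have := ContinuousLinearMap.continuous_det (𝕜 := ℝ) (E := E)
    exact this.comp (by fun_prop)
  by_contra hneg
  push Not at hneg
  have h0 : (ContinuousLinearMap.id ℝ E + (0:ℝ) • A).det = 1 := by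
    simp [ContinuousLinearMap.det]
  have := intermediate_value_Icc' ht0 hcont.continuousOn
  obtain ⟨s, hs, hs'⟩ := this ⟨hneg, by simp only [h0]; exact zero_le_one⟩
  exact hne s hs hs'

/-- Integral over a ball of a polynomial in `t` with continuous coefficients is constant
if constant for small `t`. -/
lemma poly_integral_const [MeasurableSpace E] [BorelSpace E] (R : ℝ)
    (q : Polynomial C(E, ℝ)) (c t0 : ℝ) (ht0 : 0 < t0)
    (hq : ∀ t : ℝ, 0 < t → t < t0 →
      ∫ x in Metric.ball (0:E) R, (q.eval (algebraMap ℝ C(E, ℝ) t)) x = c) :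
    ∫ x in Metric.ball (0:E) R, (q.eval (algebraMap ℝ C(E, ℝ) 1)) x = c := by
  let r : Polynomial ℝ := ∑ i ∈ q.support, monomial i (∫ x in Metric.ball (0:E) R, q.coeff i x)
  have hr : ∀ t : ℝ, ∫ x in Metric.ball (0:E) R, (q.eval (algebraMap ℝ C(E, ℝ) t)) x = r.eval t := by
    intro t
    have h1 : ∀ x, (q.eval (algebraMap ℝ C(E, ℝ) t)) x = ∑ i ∈ q.support, q.coeff i x * t ^ i := by
      intro x
      rw [Polynomial.eval_eq_sum, Polynomial.sum, ContinuousMap.sum_apply]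
      simp
    simp_rw [h1]
    rw [integral_finsetSum]
    · simp only [r, Polynomial.eval_finsetSum, Polynomial.eval_monomial]
      refine Finset.sum_congr rfl fun i _ => ?_
      rw [integral_mul_const]
    · intro i _
      have hc : Continuous (fun x => q.coeff i x * t ^ i) := by fun_prop
      exact (hc.continuousOn.integrableOn_compact (isCompact_closedBall (0:E) R)).mono_set
        Metric.ball_subset_closedBall
  have : r = Polynomial.C c := by
    apply Polynomial.eq_of_infinite_eval_eq
    apply (Set.Ioo_infinite ht0).mono
    intro t ht
    simp only [Set.mem_ofPred_eq, eval_C]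
    rw [← hr, hq t ht.1 ht.2]
  rw [hr, this, eval_C]

lemma moment_identity [MeasurableSpace E] [BorelSpace E] (h : E → E) (hh : ContDiff ℝ 1 h)
    (R : ℝ) (hR : 0 < R) (hz : ∀ x, R ≤ ‖x‖ → h x = 0) (M : ℝ) (m : ℕ) :
    ∫ x in Metric.ball (0:E) R, (ContinuousLinearMap.id ℝ E + fderiv ℝ h x).det * (M - ‖x + h x‖^2)^m
      = ∫ x in Metric.ball (0:E) R, (M - ‖x‖^2)^m := by
  classical
  have hcs : HasCompactSupport h := by
    apply HasCompactSupport.intro (isCompact_closedBall (0:E) R)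
    intro x hx
    apply hz
    rw [Metric.mem_closedBall, dist_zero_right] at hx
    linarith
  obtain ⟨K, hK⟩ := hh.lipschitzWith_of_hasCompactSupport hcs one_ne_zero
  have hsmall : ∀ t : ℝ, 0 < t → t < 1 / (K + 1) →
      ∫ x in Metric.ball (0:E) R,
        (ContinuousLinearMap.id ℝ E + t • fderiv ℝ h x).det * (M - ‖x + t • h x‖^2)^m
      = ∫ x in Metric.ball (0:E) R, (M - ‖x‖^2)^m := by
    intro t ht ht1
    have htK : t * K < 1 := by
      have hK0 : (0:ℝ) ≤ K := K.2
      rw [lt_div_iff₀ (by positivity)] at ht1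
      nlinarith
    have hbij := pert_bijective h K hK t ht.le htK
    have himg : (fun x => x + t • h x) '' Metric.ball (0:E) R = Metric.ball (0:E) R := by
      have hout : ∀ x, R ≤ ‖x‖ → x + t • h x = x := fun x hx => by simp [hz x hx]
      apply Set.Subset.antisymm
      · rintro _ ⟨x, hx, rfl⟩
        rw [mem_ball_zero_iff] at hx ⊢
        by_contra hc
        push Not at hc
        have := hout _ hc
        have h2 := hbij.1 this
        rw [h2] at hc
        linarith
      · intro y hy
        obtain ⟨x, hx⟩ := hbij.2 y
        refine ⟨x, ?_, hx⟩
        rw [mem_ball_zero_iff] at hy ⊢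
        by_contra hc
        push Not at hc
        simp only [hout x hc] at hx
        rw [hx] at hc
        linarith
    have hcv := integral_image_eq_integral_abs_det_fderiv_smul (volume : Measure E)
      (s := Metric.ball (0:E) R) (f := fun x => x + t • h x)
      (f' := fun x => ContinuousLinearMap.id ℝ E + t • fderiv ℝ h x) measurableSet_ball
      (fun x _ => ((hasFDerivAt_id x).add
        (((hh.differentiable one_ne_zero) x).hasFDerivAt.const_smul t)).hasFDerivWithinAt)
      hbij.1.injOn (fun y => (M - ‖y‖^2)^m)
    rw [himg] at hcv
    rw [hcv]
    congr 1
    ext x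
    rw [abs_of_pos (det_pos_of_small _ K (norm_fderiv_le_of_lipschitz ℝ hK) t ht.le htK)]
    rfl
  -- polynomial
  have hfc : Continuous (fderiv ℝ h) := hh.continuous_fderiv one_ne_zero
  have hc := hh.continuous
  let b := Module.finBasis ℝ E
  let D : Matrix (Fin (Module.finrank ℝ E)) (Fin (Module.finrank ℝ E)) C(E, ℝ) := fun i j =>
    ⟨fun x => LinearMap.toMatrix b b (fderiv ℝ h x : E →ₗ[ℝ] E) i j, by
      simp only [LinearMap.toMatrix_apply]
      have h1 : Continuous (fun x => fderiv ℝ h x (b j)) := by fun_prop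
      exact ((b.coord i).continuous_of_finiteDimensional).comp h1⟩
  let Mq : Matrix (Fin (Module.finrank ℝ E)) (Fin (Module.finrank ℝ E)) (Polynomial C(E, ℝ)) :=
    1 + (X : Polynomial C(E, ℝ)) • D.map (Polynomial.C)
  let n0 : C(E, ℝ) := ⟨fun x => M - ‖x‖^2, by fun_prop⟩
  let n1 : C(E, ℝ) := ⟨fun x => 2 * inner ℝ x (h x), by fun_prop⟩
  let n2 : C(E, ℝ) := ⟨fun x => ‖h x‖^2, by fun_prop⟩
  let q : Polynomial C(E, ℝ) := Mq.det * (C n0 - C n1 * X - C n2 * X^2)^m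
  have hq : ∀ t x, (q.eval (algebraMap ℝ C(E, ℝ) t)) x =
      (ContinuousLinearMap.id ℝ E + t • fderiv ℝ h x).det * (M - ‖x + t • h x‖^2)^m := by
    intro t x
    simp only [q, eval_mul, ContinuousMap.mul_apply]
    congr 1
    · let φ : Polynomial C(E, ℝ) →+* ℝ :=
        ((Pi.evalRingHom (fun _ : E => ℝ) x).comp (ContinuousMap.coeFnRingHom)).comp
          (Polynomial.evalRingHom (algebraMap ℝ C(E, ℝ) t))
      have : (eval (algebraMap ℝ C(E, ℝ) t) Mq.det) x = φ Mq.det := rfl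
      rw [this, RingHom.map_det, ContinuousLinearMap.det, ← LinearMap.det_toMatrix b]
      congr 1
      ext i j
      have e1 : φ X = t := by simp [φ]
      have e2 : φ (C (D i j)) = LinearMap.toMatrix b b (fderiv ℝ h x : E →ₗ[ℝ] E) i j := by
        simp [φ, D]
      have e3 : φ ((1 : Matrix _ _ (Polynomial C(E, ℝ))) i j) = (1 : Matrix _ _ ℝ) i j := by
        simp only [Matrix.one_apply]; split_ifs <;> simp
      have e4 : (↑(ContinuousLinearMap.id ℝ E + t • fderiv ℝ h x) : E →ₗ[ℝ] E) =
         LinearMap.id + t • (fderiv ℝ h x : E →ₗ[ℝ] E) := rfl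
      rw [e4, map_add (LinearMap.toMatrix b b), map_smul (LinearMap.toMatrix b b), LinearMap.toMatrix_id]
      simp only [Mq, RingHom.mapMatrix_apply, Matrix.map_apply, Matrix.add_apply, Matrix.smul_apply,
        smul_eq_mul, map_add, map_mul, e1, e2, e3]
    · simp [n0, n1, n2]
      congr 1
      rw [norm_add_sq_real, norm_smul, inner_smul_right, mul_pow, Real.norm_eq_abs, sq_abs]
      ring
  have := poly_integral_const R q (∫ x in Metric.ball (0:E) R, (M - ‖x‖^2)^m) (1 / (K+1))
    (by have := K.2; positivity) (by
      intro t h1 h2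
      simp_rw [hq]
      exact hsmall t h1 h2)
  simp_rw [hq, one_smul] at this
  exact this

lemma perturbation_has_zero [MeasurableSpace E] [BorelSpace E] (h : E → E) (hh : ContDiff ℝ 1 h)
    (R : ℝ) (hR : 0 < R) (hz : ∀ x, R ≤ ‖x‖ → h x = 0) : ∃ x, x + h x = 0 := by
  by_contra hne
  push Not at hne
  have hc := hh.continuous
  have hfc : Continuous (fderiv ℝ h) := hh.continuous_fderiv one_ne_zero
  have hdc : Continuous (fun x => (ContinuousLinearMap.id ℝ E + fderiv ℝ h x).det) :=
    (ContinuousLinearMap.continuous_det (𝕜 := ℝ) (E := E)).comp (by fun_prop)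
  have hWc : Continuous (fun x => ‖x + h x‖) := by fun_prop
  have hcomp := isCompact_closedBall (0:E) R
  obtain ⟨x0, hx0, hmin⟩ := hcomp.exists_isMinOn ⟨0, by simp [hR.le]⟩ hWc.continuousOn
  obtain ⟨x1, hx1, hmax⟩ := hcomp.exists_isMaxOn ⟨0, by simp [hR.le]⟩ hWc.continuousOn
  set ε := ‖x0 + h x0‖ with hε
  have hεp : 0 < ε := norm_pos_iff.mpr (hne x0)
  set M := max ‖x1 + h x1‖ R with hM
  set δ := min (ε / 2) R with hδ
  have hδp : 0 < δ := lt_min (by positivity) hR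
  have hδε : δ < ε := (min_le_left _ _).trans_lt (by linarith)
  have hδR : δ ≤ R := min_le_right _ _
  have hεM : ε ≤ M := by
    have : ε ≤ ‖x1 + h x1‖ := hmin hx1
    exact this.trans (le_max_left _ _)
  have hRM : R ≤ M := le_max_right _ _
  let a := M^2 - ε^2
  let b := M^2 - δ^2
  have ha : 0 ≤ a := by simp only [a]; nlinarith
  have hab : a < b := by simp only [a, b]; nlinarith
  have hb : 0 < b := ha.trans_lt hab
  set Cc := ∫ x in Metric.ball (0:E) R, |(ContinuousLinearMap.id ℝ E + fderiv ℝ h x).det| with hCc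
  set v := (volume (Metric.ball (0:E) δ)).toReal with hv
  have hvp : 0 < v := ENNReal.toReal_pos (Metric.measure_ball_pos _ _ hδp).ne' measure_ball_lt_top.ne
  have hint : ∀ f : E → ℝ, Continuous f → IntegrableOn f (Metric.ball (0:E) R) := fun f hf =>
    (hf.continuousOn.integrableOn_compact hcomp).mono_set Metric.ball_subset_closedBall
  have key : ∀ m : ℕ, v * b^m ≤ Cc * a^m := by
    intro m
    have hid := moment_identity h hh R hR hz (M^2) m
    have hlow : v * b^m ≤ ∫ x in Metric.ball (0:E) R, (M^2 - ‖x‖^2)^m := by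
      have h1 : ∫ x in Metric.ball (0:E) δ, (M^2 - ‖x‖^2)^m ≤ ∫ x in Metric.ball (0:E) R, (M^2 - ‖x‖^2)^m := by
        apply setIntegral_mono_set (hint _ (by fun_prop))
        · filter_upwards [ae_restrict_mem measurableSet_ball] with x hx
          rw [mem_ball_zero_iff] at hx
          have : 0 ≤ M^2 - ‖x‖^2 := by nlinarith [norm_nonneg x]
          simp only [Pi.zero_apply]
          positivity
        · exact (Metric.ball_subset_ball hδR).eventuallyLE
      refine le_trans ?_ h1
      have h2 : ∫ x in Metric.ball (0:E) δ, b^m = v * b^m := by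
        rw [setIntegral_const]; rfl
      rw [← h2]
      apply setIntegral_mono_on
      · exact (hint _ continuous_const).mono_set (Metric.ball_subset_ball hδR)
      · exact (hint _ (by fun_prop)).mono_set (Metric.ball_subset_ball hδR)
      · exact measurableSet_ball
      · intro x hx
        rw [mem_ball_zero_iff] at hx
        apply pow_le_pow_left₀ hb.le
        simp only [b]
        nlinarith [norm_nonneg x]
    rw [← hid] at hlow
    refine hlow.trans ?_
    rw [hCc, ← integral_mul_const]
    apply setIntegral_mono_on
    · exact hint _ (by fun_prop)
    · exact hint _ (by fun_prop)
    · exact measurableSet_ball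
    · intro x hx
      have hx' := Metric.ball_subset_closedBall hx
      have e1 : ε ≤ ‖x + h x‖ := hmin hx'
      have e2 : ‖x + h x‖ ≤ M := le_trans (hmax hx') (le_max_left _ _)
      have e3 : 0 ≤ M^2 - ‖x + h x‖^2 := by nlinarith
      have e4 : M^2 - ‖x + h x‖^2 ≤ a := by simp only [a]; nlinarith
      have e5 : (M^2 - ‖x + h x‖^2)^m ≤ a^m := pow_le_pow_left₀ e3 e4 m
      exact mul_le_mul (le_abs_self _) e5 (by positivity) (abs_nonneg _)
  have hlim : Filter.Tendsto (fun m : ℕ => Cc * (a/b)^m) Filter.atTop (nhds (Cc * 0)) :=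
    (tendsto_pow_atTop_nhds_zero_of_lt_one (by positivity) ((div_lt_one hb).mpr hab)).const_mul _
  have : v ≤ Cc * 0 := by
    apply ge_of_tendsto' hlim
    intro m
    rw [div_pow, ← mul_div_assoc, le_div_iff₀ (by positivity)]
    exact key m
  linarith

/-- Consequence of Brouwer's theorem: a coercive C¹ field has a zero. -/
lemma coercive_has_zero (G : E → E) (hG : ContDiff ℝ 1 G) (R : ℝ) (hR : 0 < R)
    (hco : ∀ x, R ≤ ‖x‖ → 0 < inner ℝ (G x) x) : ∃ x, G x = 0 := by
  let _ : MeasurableSpace E := borel E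
  have : BorelSpace E := ⟨rfl⟩
  let χ : ContDiffBump (0:E) := ⟨R, R + 1, hR, by linarith⟩
  obtain ⟨x, hx⟩ := perturbation_has_zero (fun x => χ x • (G x - x))
    (χ.contDiff.smul (hG.sub contDiff_id)) (R + 1) (by linarith) (by
      intro x hx
      have : χ x = 0 := χ.zero_of_le_dist (by simpa using hx)
      simp [this])
  refine ⟨x, ?_⟩
  by_cases hxR : ‖x‖ ≤ R
  · have : χ x = 1 := χ.one_of_mem_closedBall (by simpa using hxR)
    simpa [this] using hx
  · exfalso
    push Not at hxR
    have h1 := hco x hxR.le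
    have h2 : inner ℝ (x + χ x • (G x - x)) x = (0:ℝ) := by
      rw [hx, inner_zero_left]
    rw [inner_add_left, inner_smul_left, inner_sub_left, real_inner_self_eq_norm_sq] at h2
    simp only [conj_trivial] at h2
    have h3 := χ.nonneg (x := x)
    have h4 := χ.le_one (x := x)
    have h5 : 0 < ‖x‖^2 := by have := hR.trans hxR; positivity
    rcases h3.eq_or_lt with h | h
    · rw [← h] at h2; linarith
    · nlinarith [mul_pos h h1]

end BrouwerPart

section SNPart

open MeasureTheory

/-- Exponential basis function. -/
def ek (k : ℤ) (x : ℝ) : ℂ := Complex.exp (Complex.I * (k : ℂ) * (x : ℂ))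

lemma ek_conj (k : ℤ) (x : ℝ) : (starRingEnd ℂ) (ek k x) = ek (-k) x := by
  simp [ek, ← Complex.exp_conj]

lemma ek_add (k l : ℤ) (x : ℝ) : ek k x * ek l x = ek (k + l) x := by
  simp only [ek, ← Complex.exp_add]; congr 1; push_cast; ring

lemma ek_hasDerivAt (k : ℤ) (x : ℝ) : HasDerivAt (ek k) (Complex.I * k * ek k x) x := by
  have h1 : HasDerivAt (fun y : ℝ => Complex.I * (k : ℂ) * (y : ℂ)) (Complex.I * k * 1) x :=
    (Complex.ofRealCLM.hasDerivAt (x := x)).const_mul _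
  exact h1.cexp.congr_deriv (by simp only [ek]; ring)

lemma ek_continuous (k : ℤ) : Continuous (ek k) := by
  unfold ek; fun_prop

lemma ek_periodic (k : ℤ) : ek k Real.pi = ek k (-Real.pi) := by
  have : Complex.I * (k : ℂ) * ((Real.pi : ℝ) : ℂ)
      = Complex.I * (k : ℂ) * ((-Real.pi : ℝ) : ℂ) + k * (2 * Real.pi * Complex.I) := by
    push_cast; ring
  simp only [ek]
  rw [this, Complex.exp_periodic.int_mul k]

lemma ek_integral (k : ℤ) : ∫ x in (-Real.pi)..Real.pi, ek k x = if k = 0 then 2 * Real.pi else 0 := by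
  split_ifs with h
  · subst h
    simp [ek]
    ring
  · have hk : Complex.I * (k:ℂ) ≠ 0 := mul_ne_zero Complex.I_ne_zero (by exact_mod_cast h)
    have h1 := intervalIntegral.integral_eq_sub_of_hasDerivAt (a := -Real.pi) (b := Real.pi)
      (fun x _ => ek_hasDerivAt k x)
      ((continuous_const.mul (ek_continuous k)).intervalIntegrable _ _)
    rw [ek_periodic, sub_self, intervalIntegral.integral_const_mul] at h1
    exact (mul_eq_zero.mp h1).resolve_left hk

/-- Complex trigonometric polynomial. -/
def tp (N : ℕ) (c : ℤ → ℂ) (x : ℝ) : ℂ := ∑ k ∈ Finset.Icc (-(N : ℤ)) (N : ℤ), c k * ek k x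

lemma InSN_iff (N : ℕ) (v : ℝ → ℝ) : InSN N v ↔ ∃ c : ℤ → ℂ, ∀ x, (v x : ℂ) = tp N c x := Iff.rfl

lemma sum_Icc_neg {M : Type*} [AddCommMonoid M] (N : ℕ) (f : ℤ → M) :
    ∑ k ∈ Finset.Icc (-(N : ℤ)) (N : ℤ), f (-k) = ∑ k ∈ Finset.Icc (-(N : ℤ)) (N : ℤ), f k := by
  apply Finset.sum_nbij' (fun k => -k) (fun k => -k) <;> simp <;> intros <;> omega

lemma InSN_re (N : ℕ) (c : ℤ → ℂ) : InSN N (fun x => (tp N c x).re) := by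
  refine ⟨fun k => (c k + (starRingEnd ℂ) (c (-k))) / 2, fun x => ?_⟩
  rw [Complex.re_eq_add_conj]
  have h : (starRingEnd ℂ) (tp N c x) = ∑ k ∈ Finset.Icc (-(N : ℤ)) (N : ℤ), (starRingEnd ℂ) (c (-k)) * ek k x := by
    rw [← sum_Icc_neg]
    simp [tp, map_sum, ek_conj]
  rw [h, tp, ← Finset.sum_add_distrib, Finset.sum_div]
  refine Finset.sum_congr rfl fun k _ => ?_
  change _ = _ * ek k x
  ring

lemma InSN_PN (N : ℕ) (u : ℝ → ℝ) : InSN N (PN N u) := InSN_re N (fCoeff u)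

lemma InSN.eq_re {N : ℕ} {v : ℝ → ℝ} (h : InSN N v) : ∃ c : ℤ → ℂ, v = fun x => (tp N c x).re := by
  obtain ⟨c, hc⟩ := h
  exact ⟨c, funext fun x => by rw [tp]; simp only [ek]; rw [← hc]; simp⟩

lemma tp_hasDerivAt (N : ℕ) (c : ℤ → ℂ) (x : ℝ) :
    HasDerivAt (tp N c) (tp N (fun k => c k * (Complex.I * k)) x) x := by
  unfold tp
  apply HasDerivAt.fun_sum
  intro k _
  exact ((ek_hasDerivAt k x).const_mul (c k)).congr_deriv (by ring)

lemma tpre_hasDerivAt (N : ℕ) (c : ℤ → ℂ) (x : ℝ) :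
    HasDerivAt (fun x => (tp N c x).re) (tp N (fun k => c k * (Complex.I * k)) x).re x := by
  have := (Complex.reCLM.hasFDerivAt (x := tp N c x)).comp_hasDerivAt x (tp_hasDerivAt N c x)
  exact this

lemma InSN.hasDerivAt {N : ℕ} {v : ℝ → ℝ} (h : InSN N v) (x : ℝ) : HasDerivAt v (deriv v x) x := by
  obtain ⟨c, rfl⟩ := h.eq_re
  exact (tpre_hasDerivAt N c x).differentiableAt.hasDerivAt

lemma InSN.deriv {N : ℕ} {v : ℝ → ℝ} (h : InSN N v) : InSN N (deriv v) := by
  obtain ⟨c, rfl⟩ := h.eq_re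
  have : _root_.deriv (fun x => (tp N c x).re) = fun x => (tp N (fun k => c k * (Complex.I * k)) x).re :=
    funext fun x => (tpre_hasDerivAt N c x).deriv
  rw [this]
  exact InSN_re _ _

lemma InSN.continuous {N : ℕ} {v : ℝ → ℝ} (h : InSN N v) : Continuous v :=
  continuous_iff_continuousAt.mpr fun x => (h.hasDerivAt x).continuousAt

lemma InSN.periodic {N : ℕ} {v : ℝ → ℝ} (h : InSN N v) : v Real.pi = v (-Real.pi) := by
  obtain ⟨c, rfl⟩ := h.eq_re
  simp [tp, ek_periodic]

lemma InSN.add {N : ℕ} {v w : ℝ → ℝ} (h : InSN N v) (h' : InSN N w) : InSN N (v + w) := by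
  obtain ⟨c, hc⟩ := h
  obtain ⟨d, hd⟩ := h'
  refine ⟨c + d, fun x => ?_⟩
  simp only [Pi.add_apply, Complex.ofReal_add, hc, hd, add_mul, Finset.sum_add_distrib]

lemma InSN.smul {N : ℕ} {v : ℝ → ℝ} (h : InSN N v) (a : ℝ) : InSN N (a • v) := by
  obtain ⟨c, hc⟩ := h
  refine ⟨fun k => a * c k, fun x => ?_⟩
  simp only [Pi.smul_apply, smul_eq_mul, Complex.ofReal_mul, hc, Finset.mul_sum, mul_assoc]

lemma InSN.zero {N : ℕ} : InSN N (0 : ℝ → ℝ) := ⟨0, fun x => by simp⟩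

lemma fCoeff_eq (u : ℝ → ℝ) (k : ℤ) :
    fCoeff u k = (1 / (2 * Real.pi)) * ∫ x in (-Real.pi)..Real.pi, ek (-k) x * (u x : ℂ) := by
  simp [fCoeff, ek]

lemma fCoeff_add (u v : ℝ → ℝ) (hu : Continuous u) (hv : Continuous v) (k : ℤ) :
    fCoeff (fun x => u x + v x) k = fCoeff u k + fCoeff v k := by
  have := ek_continuous (-k)
  rw [fCoeff_eq, fCoeff_eq, fCoeff_eq, ← mul_add, ← intervalIntegral.integral_add]
  · simp [mul_add]
  · exact Continuous.intervalIntegrable (by fun_prop) _ _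
  · exact Continuous.intervalIntegrable (by fun_prop) _ _

lemma fCoeff_smul (a : ℝ) (u : ℝ → ℝ) (k : ℤ) :
    fCoeff (fun x => a * u x) k = a * fCoeff u k := by
  rw [fCoeff_eq, fCoeff_eq, mul_left_comm (a : ℂ), ← intervalIntegral.integral_const_mul (a : ℂ)]
  congr 1
  apply intervalIntegral.integral_congr
  intro x _
  push_cast; ring

lemma PN_add (N : ℕ) (u v : ℝ → ℝ) (hu : Continuous u) (hv : Continuous v) :
    PN N (fun x => u x + v x) = PN N u + PN N v := by
  ext x
  simp [PN, fCoeff_add u v hu hv, add_mul, Finset.sum_add_distrib]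

lemma PN_smul (N : ℕ) (a : ℝ) (u : ℝ → ℝ) :
    PN N (fun x => a * u x) = a • PN N u := by
  ext x
  simp only [PN, fCoeff_smul, mul_assoc, ← Finset.mul_sum, Complex.re_ofReal_mul, Pi.smul_apply, smul_eq_mul]

lemma PN_inner (N : ℕ) (w χ : ℝ → ℝ) (hw : Continuous w) (hχ : InSN N χ) :
    L2inner (PN N w) χ = L2inner w χ := by
  have hχc := hχ.continuous
  have hPc := (InSN_PN N w).continuous
  obtain ⟨c, hc⟩ := (InSN_iff N χ).mp hχ
  have hpi : (Real.pi : ℂ) ≠ 0 := by exact_mod_cast Real.pi_ne_zero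
  have hek := ek_continuous
  -- integral of `w χ`
  have h1 : ((L2inner w χ : ℝ) : ℂ) = ∑ k ∈ Finset.Icc (-(N : ℤ)) (N : ℤ), c k * (2 * Real.pi * fCoeff w (-k)) := by
    rw [L2inner, ← intervalIntegral.integral_ofReal]
    have : ∀ x, ((w x * χ x : ℝ) : ℂ) = ∑ k ∈ Finset.Icc (-(N : ℤ)) (N : ℤ), c k * (ek k x * w x) := by
      intro x
      push_cast
      rw [hc, tp, Finset.mul_sum]
      exact Finset.sum_congr rfl fun k _ => by ring
    simp_rw [this]
    rw [intervalIntegral.integral_finsetSum]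
    · refine Finset.sum_congr rfl fun k _ => ?_
      rw [intervalIntegral.integral_const_mul, fCoeff_eq, neg_neg]
      field_simp
    · intro k _
      have := hek k
      exact Continuous.intervalIntegrable (by fun_prop) _ _
  have h2 : L2inner (PN N w) χ = (∫ x in (-Real.pi)..Real.pi, tp N (fCoeff w) x * tp N c x).re := by
    have hi : IntervalIntegrable (fun x => tp N (fCoeff w) x * tp N c x) volume (-Real.pi) Real.pi := by
      apply Continuous.intervalIntegrable
      unfold tp
      fun_prop
    have := Complex.reCLM.intervalIntegral_comp_comm hi
    simp only [Complex.reCLM_apply] at this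
    rw [← this, L2inner]
    congr 1
    ext x
    rw [← hc, Complex.re_mul_ofReal]
    rfl
  have h3 : ∫ x in (-Real.pi)..Real.pi, tp N (fCoeff w) x * tp N c x
      = ∑ k ∈ Finset.Icc (-(N : ℤ)) (N : ℤ), c k * (2 * Real.pi * fCoeff w (-k)) := by
    have : ∀ x, tp N (fCoeff w) x * tp N c x = ∑ k ∈ Finset.Icc (-(N : ℤ)) (N : ℤ),
        ∑ j ∈ Finset.Icc (-(N : ℤ)) (N : ℤ), (c k * fCoeff w j) * ek (k + j) x := by
      intro x
      rw [mul_comm, tp, tp, Finset.sum_mul_sum]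
      refine Finset.sum_congr rfl fun k _ => Finset.sum_congr rfl fun j _ => ?_
      rw [← ek_add]; ring
    simp_rw [this]
    rw [intervalIntegral.integral_finsetSum]
    · refine Finset.sum_congr rfl fun k hk => ?_
      rw [intervalIntegral.integral_finsetSum]
      · simp_rw [intervalIntegral.integral_const_mul, ek_integral]
        rw [Finset.sum_eq_single (-k)]
        · simp; ring
        · intro j _ hj
          rw [if_neg (by omega)]; simp
        · intro hk'
          simp only [Finset.mem_Icc] at hk hk'
          omega
      · intro j _
        exact (continuous_const.mul (hek _)).intervalIntegrable _ _
    · intro k _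
      apply Continuous.intervalIntegrable
      fun_prop
  rw [h2, h3, ← h1, Complex.ofReal_re]

lemma InSN.inner_dx3 {N : ℕ} {v : ℝ → ℝ} (h : InSN N v) : L2inner (dx3 v) v = 0 := by
  have hi : ∀ {u : ℝ → ℝ}, InSN N u → IntervalIntegrable u volume (-Real.pi) Real.pi :=
    fun hu => hu.continuous.intervalIntegrable _ _
  have h1 := intervalIntegral.integral_mul_deriv_eq_deriv_mul (a := -Real.pi) (b := Real.pi)
    (fun x _ => h.hasDerivAt x) (fun x _ => h.deriv.deriv.hasDerivAt x)
    (hi h.deriv) (hi h.deriv.deriv.deriv)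
  have h2 := intervalIntegral.integral_mul_deriv_eq_deriv_mul (a := -Real.pi) (b := Real.pi)
    (fun x _ => h.deriv.hasDerivAt x) (fun x _ => h.deriv.hasDerivAt x)
    (hi h.deriv.deriv) (hi h.deriv.deriv)
  rw [h.periodic, h.deriv.deriv.periodic, sub_self, zero_sub] at h1
  rw [h.deriv.periodic, sub_self, zero_sub] at h2
  have h3 : ∫ x in (-Real.pi)..Real.pi, _root_.deriv (_root_.deriv v) x * _root_.deriv v x
     = ∫ x in (-Real.pi)..Real.pi, _root_.deriv v x * _root_.deriv (_root_.deriv v) x := by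
    congr 1; ext x; ring
  have h4 : L2inner (dx3 v) v = ∫ x in (-Real.pi)..Real.pi, v x * _root_.deriv (_root_.deriv (_root_.deriv v)) x := by
    rw [L2inner, dx3]; congr 1; ext x; ring
  rw [h4]
  linarith

lemma InSN.inner_nonlin {N : ℕ} {v : ℝ → ℝ} (h : InSN N v) :
    L2inner (fun x => v x * dx v x) v = 0 := by
  have hc := h.continuous
  have hc' := h.deriv.continuous
  have h1 := intervalIntegral.integral_eq_sub_of_hasDerivAt (a := -Real.pi) (b := Real.pi)
    (fun x _ => (h.hasDerivAt x).fun_pow 3)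
    (Continuous.intervalIntegrable (by fun_prop) _ _)
  rw [h.periodic, sub_self] at h1
  have h2 : ∀ x, ((3:ℕ):ℝ) * v x ^ (3 - 1) * _root_.deriv v x = 3 * (v x * dx v x * v x) := by
    intro x; simp [dx]; ring
  simp_rw [h2] at h1
  rw [intervalIntegral.integral_const_mul] at h1
  rw [L2inner]
  linarith

/-- The real space `S_N` as a submodule of functions. -/
def SNsub (N : ℕ) : Submodule ℝ (ℝ → ℝ) where
  carrier := {v | InSN N v}
  add_mem' := fun h h' => h.add h'
  zero_mem' := InSN.zero
  smul_mem' := fun a _ h => h.smul a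

/-- Coefficients to functions. -/
def tpLin (N : ℕ) : ((Finset.Icc (-(N : ℤ)) (N : ℤ)) → ℂ) →ₗ[ℝ] (ℝ → ℝ) where
  toFun c := fun x => (∑ k : Finset.Icc (-(N : ℤ)) (N : ℤ), c k * ek k x).re
  map_add' c d := by ext x; simp [add_mul, Finset.sum_add_distrib]
  map_smul' a c := by
    ext x
    simp only [Pi.smul_apply, Complex.real_smul, mul_assoc, ← Finset.mul_sum,
      Complex.re_ofReal_mul, RingHom.id_apply, smul_eq_mul]

instance (N : ℕ) : FiniteDimensional ℝ (SNsub N) := by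
  have : SNsub N ≤ LinearMap.range (tpLin N) := by
    intro v hv
    obtain ⟨c, hc⟩ := InSN.eq_re (show InSN N v from hv)
    refine ⟨fun k => c k, ?_⟩
    rw [hc]
    ext x
    simp only [tpLin, tp, LinearMap.coe_mk, AddHom.coe_mk]
    rw [Finset.sum_coe_sort (Finset.Icc (-(N : ℤ)) (N : ℤ)) (fun k => c k * ek k x)]
  exact Submodule.finiteDimensional_of_le this

/-- Type synonym carrying the L² structure. -/
def SNt (N : ℕ) : Type := SNsub N

instance (N : ℕ) : AddCommGroup (SNt N) := inferInstanceAs (AddCommGroup (SNsub N))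
instance (N : ℕ) : Module ℝ (SNt N) := inferInstanceAs (Module ℝ (SNsub N))

/-- underlying function -/
def SNt.fn {N : ℕ} (v : SNt N) : ℝ → ℝ := Subtype.val (p := fun v => v ∈ SNsub N) v

/-- constructor -/
def SNt.mk {N : ℕ} (v : ℝ → ℝ) (h : InSN N v) : SNt N := (⟨v, h⟩ : SNsub N)

lemma SNt.mem {N : ℕ} (v : SNt N) : InSN N v.fn := Subtype.prop (p := fun v => v ∈ SNsub N) v

@[simp] lemma SNt.fn_mk {N : ℕ} (v : ℝ → ℝ) (h : InSN N v) : (SNt.mk v h).fn = v := rfl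
@[simp] lemma SNt.fn_add {N : ℕ} (v w : SNt N) : (v + w).fn = v.fn + w.fn := rfl
@[simp] lemma SNt.fn_sub {N : ℕ} (v w : SNt N) : (v - w).fn = v.fn - w.fn := rfl
@[simp] lemma SNt.fn_smul {N : ℕ} (a : ℝ) (v : SNt N) : (a • v).fn = a • v.fn := rfl
@[simp] lemma SNt.fn_zero {N : ℕ} : (0 : SNt N).fn = 0 := rfl
lemma SNt.ext {N : ℕ} {v w : SNt N} (h : v.fn = w.fn) : v = w := Subtype.ext h

lemma L2inner_comm (u v : ℝ → ℝ) : L2inner u v = L2inner v u := by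
  simp only [L2inner, mul_comm]

lemma L2inner_add (u v w : ℝ → ℝ) (hu : Continuous u) (hv : Continuous v) (hw : Continuous w) :
    L2inner (u + v) w = L2inner u w + L2inner v w := by
  simp only [L2inner, Pi.add_apply, add_mul]
  apply intervalIntegral.integral_add <;> exact Continuous.intervalIntegrable (by fun_prop) _ _

lemma L2inner_smul (a : ℝ) (u w : ℝ → ℝ) :
    L2inner (a • u) w = a * L2inner u w := by
  simp only [L2inner, Pi.smul_apply, smul_eq_mul, mul_assoc, intervalIntegral.integral_const_mul]

lemma tp_periodic (N : ℕ) (c : ℤ → ℂ) (x : ℝ) : tp N c (x + 2 * Real.pi) = tp N c x := by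
  unfold tp
  refine Finset.sum_congr rfl fun k _ => ?_
  congr 1
  have : Complex.I * (k : ℂ) * ((x + 2 * Real.pi : ℝ) : ℂ)
      = Complex.I * (k : ℂ) * (x : ℂ) + k * (2 * Real.pi * Complex.I) := by
    push_cast; ring
  simp only [ek]
  rw [this, Complex.exp_periodic.int_mul k]

lemma InSN.eq_zero {N : ℕ} {v : ℝ → ℝ} (h : InSN N v) (h0 : L2inner v v = 0) : v = 0 := by
  have hp : Function.Periodic v (2 * Real.pi) := by
    obtain ⟨c, rfl⟩ := h.eq_re
    intro x
    simp only [tp_periodic]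
  have hc := h.continuous
  have hpos := Real.pi_pos
  have hz : ∀ x ∈ Set.Icc (-Real.pi) Real.pi, v x = 0 := by
    by_contra hne
    push Not at hne
    obtain ⟨x, hx, hxv⟩ := hne
    have : 0 < ∫ x in (-Real.pi)..Real.pi, v x * v x :=
      intervalIntegral.integral_pos (by linarith) (by fun_prop)
        (fun y _ => mul_self_nonneg _) ⟨x, hx, mul_self_pos.mpr hxv⟩
    rw [L2inner] at h0
    linarith
  ext x
  obtain ⟨y, hy, hxy⟩ := hp.exists_mem_Ico (by linarith) x (-Real.pi)
  rw [hxy]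
  exact hz y ⟨hy.1, by linarith [hy.2]⟩

/-- L² core -/
def SNcore (N : ℕ) : InnerProductSpace.Core ℝ (SNt N) where
  inner u v := L2inner u.fn v.fn
  conj_inner_symm u v := by simp [L2inner_comm]
  re_inner_nonneg u := by
    simp only [L2inner]
    exact intervalIntegral.integral_nonneg (by linarith [Real.pi_pos]) (fun x _ => mul_self_nonneg _)
  add_left u v w := L2inner_add _ _ _ u.mem.continuous v.mem.continuous w.mem.continuous
  smul_left u v a := by simp [L2inner_smul]
  definite u h := SNt.ext (u.mem.eq_zero h)

instance (N : ℕ) : NormedAddCommGroup (SNt N) :=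
  InnerProductSpace.Core.toNormedAddCommGroup (cd := SNcore N)

instance (N : ℕ) : InnerProductSpace ℝ (SNt N) := InnerProductSpace.ofCore (SNcore N).toCore

instance (N : ℕ) : FiniteDimensional ℝ (SNt N) := inferInstanceAs (FiniteDimensional ℝ (SNsub N))

lemma SNt.inner_def {N : ℕ} (u v : SNt N) : inner ℝ u v = L2inner u.fn v.fn := rfl

lemma InSN.deriv_add {N : ℕ} {u v : ℝ → ℝ} (h : InSN N u) (h' : InSN N v) :
    _root_.deriv (u + v) = _root_.deriv u + _root_.deriv v :=
  funext fun x => ((h.hasDerivAt x).add (h'.hasDerivAt x)).deriv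

lemma InSN.deriv_smul {N : ℕ} {u : ℝ → ℝ} (h : InSN N u) (a : ℝ) :
    _root_.deriv (a • u) = a • _root_.deriv u :=
  funext fun x => ((h.hasDerivAt x).const_smul a).deriv

/-- derivative -/
def SNt.D (N : ℕ) : SNt N →ₗ[ℝ] SNt N where
  toFun v := SNt.mk (deriv v.fn) v.mem.deriv
  map_add' u v := SNt.ext (u.mem.deriv_add v.mem)
  map_smul' a u := SNt.ext (u.mem.deriv_smul a)

/-- bilinear form `P_N(u v)` -/
def SNt.Q (N : ℕ) : SNt N →ₗ[ℝ] SNt N →ₗ[ℝ] SNt N :=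
  LinearMap.mk₂ ℝ (fun u v => SNt.mk (PN N (fun x => u.fn x * v.fn x)) (InSN_PN _ _))
    (fun u u' v => SNt.ext (by
      have h1 := u.mem.continuous
      have h2 := u'.mem.continuous
      have h3 := v.mem.continuous
      simp only [SNt.fn_mk, SNt.fn_add, Pi.add_apply, add_mul]
      exact PN_add _ _ _ (by fun_prop) (by fun_prop)))
    (fun a u v => SNt.ext (by
      simp only [SNt.fn_mk, SNt.fn_smul, Pi.smul_apply, smul_eq_mul, mul_assoc]
      exact PN_smul _ _ _))
    (fun v u u' => SNt.ext (by
      have h1 := u.mem.continuous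
      have h2 := u'.mem.continuous
      have h3 := v.mem.continuous
      simp only [SNt.fn_mk, SNt.fn_add, Pi.add_apply, mul_add]
      exact PN_add _ _ _ (by fun_prop) (by fun_prop)))
    (fun a v u => SNt.ext (by
      simp only [SNt.fn_mk, SNt.fn_smul, Pi.smul_apply, smul_eq_mul, mul_left_comm _ a]
      exact PN_smul _ _ _))

/-- The map `F` on `S_N`. -/
def SNt.F (N : ℕ) (v : SNt N) : SNt N :=
  - SNt.D N (SNt.D N (SNt.D N v)) - SNt.Q N v (SNt.D N v)

lemma SNt.fn_F {N : ℕ} (v : SNt N) : (SNt.F N v).fn = Fmap N v.fn := rfl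

lemma SNt.contDiff_F (N : ℕ) : ContDiff ℝ 1 (SNt.F N) := by
  have hD : ContDiff ℝ 1 (SNt.D N) := (LinearMap.toContinuousLinearMap (SNt.D N)).contDiff
  let Qc : SNt N →L[ℝ] SNt N →L[ℝ] SNt N := LinearMap.toContinuousLinearMap
    ((LinearMap.toContinuousLinearMap (𝕜 := ℝ) (E := SNt N) (F' := SNt N)).toLinearMap ∘ₗ (SNt.Q N))
  have hQ : ContDiff ℝ 1 (fun v => SNt.Q N v (SNt.D N v)) :=
    Qc.contDiff.clm_apply hD
  exact ((hD.comp (hD.comp hD)).neg).sub hQ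

lemma SNt.inner_F {N : ℕ} (v : SNt N) : inner ℝ (SNt.F N v) v = (0:ℝ) := by
  have h1 : inner ℝ (SNt.D N (SNt.D N (SNt.D N v))) v = (0:ℝ) := v.mem.inner_dx3
  have h2 : inner ℝ (SNt.Q N v (SNt.D N v)) v = (0:ℝ) := by
    have hc := v.mem.continuous
    have hc' := v.mem.deriv.continuous
    rw [SNt.inner_def]
    refine (PN_inner N _ _ ?_ v.mem).trans v.mem.inner_nonlin
    exact hc.mul hc'
  rw [SNt.F, inner_sub_left, inner_neg_left, h1, h2]
  simp

lemma one_stage (N : ℕ) (a : ℝ) (U : ℝ → ℝ) (hU : InSN N U) :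
    ∃ Y : ℝ → ℝ, InSN N Y ∧ ∀ x, Y x = U x + a * Fmap N (fun y => (Y y + U y) / 2) x := by
  let u : SNt N := SNt.mk U hU
  obtain ⟨z, hz⟩ := coercive_has_zero (fun z => z - u - (a / 2) • SNt.F N z)
    ((contDiff_id.sub contDiff_const).sub ((SNt.contDiff_F N).const_smul (a / 2)))
    (‖u‖ + 1) (by positivity) (by
      intro x hx
      rw [inner_sub_left, inner_sub_left, inner_smul_left, SNt.inner_F, real_inner_self_eq_norm_sq]
      have := real_inner_le_norm u x
      have := norm_nonneg u
      simp only [mul_zero, sub_zero]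
      nlinarith)
  refine ⟨((2:ℝ) • z - u).fn, SNt.mem _, fun x => ?_⟩
  have h1 : (fun y => (((2:ℝ) • z - u).fn y + U y) / 2) = z.fn := by
    ext y
    simp [u]
  rw [h1, ← SNt.fn_F]
  have h2 : (z - u - (a / 2) • SNt.F N z).fn x = 0 := by rw [hz]; rfl
  simp only [SNt.fn_sub, SNt.fn_smul, Pi.sub_apply, Pi.smul_apply, smul_eq_mul] at h2 ⊢
  have : u.fn x = U x := rfl
  rw [this] at h2 ⊢
  linarith

end SNPart

/-- Proposition 4.2: existence of the stages of one step of the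
`s`-stage IMR-composition scheme, for any time step `k > 0`. -/
theorem composition_stages_exist
    (N : ℕ) (hN : 1 ≤ N) (k : ℝ) (hk : 0 < k) (s : ℕ) (hs : 1 ≤ s)
    (b : ℕ → ℝ) (hb : ∀ i, 1 ≤ i → i ≤ s → b i ≠ 0)
    (U : ℝ → ℝ) (hU : InSN N U) :
    ∃ Y : ℕ → ℝ → ℝ, (∀ x : ℝ, Y 0 x = U x) ∧
      (∀ i, 1 ≤ i → i ≤ s → InSN N (Y i)) ∧
      (∀ i, 1 ≤ i → i ≤ s → ∀ x : ℝ,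
        Y i x = Y (i-1) x + k * b i * Fmap N (fun y => (Y i y + Y (i-1) y) / 2) x) := by
  choose! nxt hn1 hn2 using one_stage N
  let Y : ℕ → ℝ → ℝ := fun n => Nat.rec U (fun i y => nxt (k * b (i + 1)) y) n
  have hY : ∀ n, InSN N (Y n) := by
    intro n
    induction n with
    | zero => exact hU
    | succ n ih => exact hn1 _ _ ih
  refine ⟨Y, fun x => rfl, fun i _ _ => hY i, ?_⟩
  intro i hi _ x
  obtain ⟨j, rfl⟩ : ∃ j, i = j + 1 := ⟨i - 1, by omega⟩
  exact hn2 (k * b (j + 1)) (Y j) (hY j) x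

end KdVSpec
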